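/- arXiv:math/0703630 — 3 statements merged into one kernel-verified Lean document; each statement's English description precedes it below -/
import Mathlib

section
/- Let (U,ρ) be a complete metric space, let p ≥ 1, and let f ∈ W̃(ℝ,U) ∩ M*_p(ℝ,U). Then for every ε' > 0 there exists ε > 0 such that P^{(ρ)}_p(ε'; f) ⊇ P^{(ρ')}_1(ε; f); that is, every (ε, D^{(ρ')}_1)-almost period of f is an (ε', D^{(ρ)}_p)-almost period of f. -/
open MeasureTheory Filter Topology TopologicalSpace
open scoped ENNReal Pointwise

noncomputable section

/-- The truncated ("bounded") distance `ρ'(x,y) = min {1, ρ(x,y)}` on a metric space. -/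
def bdist {α : Type*} [PseudoMetricSpace α] : α → α → ℝ := fun x y => min 1 (dist x y)

/-- The Hausdorff distance `dist_{ρ'}` (corresponding to the truncated metric `ρ'`)
between non-empty closed subsets of a metric space. -/
def clDist {α : Type*} [MetricSpace α] : Closeds α → Closeds α → ℝ :=
  fun A B => (min 1 (EMetric.hausdorffEdist (A : Set α) (B : Set α))).toReal

/-- The Hausdorff distance `dist_ρ` between (non-empty closed bounded) subsets. -/
def clbDist {α : Type*} [MetricSpace α] : Closeds α → Closeds α → ℝ :=
  fun A B => Metric.hausdorffDist (A : Set α) (B : Set α)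

/-- `D^{(d)}_{p,l}(f,g) = ( sup_ξ (1/l) ∫_ξ^{ξ+l} d(f t, g t)^p dt )^{1/p}`,
valued in `ℝ≥0∞`. -/
def weylD {α : Type*} (d : α → α → ℝ) (p l : ℝ) (f g : ℝ → α) : ℝ≥0∞ :=
  (⨆ ξ : ℝ, ENNReal.ofReal (1 / l) *
      ∫⁻ t in Set.Icc ξ (ξ + l), ENNReal.ofReal (d (f t) (g t) ^ p)) ^ (1 / p)

/-- The Weyl semimetric `D^{(d)}_p(f,g) = lim_{l → +∞} D^{(d)}_{p,l}(f,g)`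
(the limit exists; it is formalized here as a `limsup`). -/
def weylDinf {α : Type*} (d : α → α → ℝ) (p : ℝ) (f g : ℝ → α) : ℝ≥0∞ :=
  Filter.limsup (fun l => weylD d p l f g) Filter.atTop

/-- Membership in `M_p(ℝ, α)`: `f` is (strongly) measurable and
`sup_ξ ∫_ξ^{ξ+1} d(f t, x₀)^p dt < +∞`. -/
def MemMp {α : Type*} [TopologicalSpace α] (d : α → α → ℝ) (p : ℝ) (x₀ : α)
    (f : ℝ → α) : Prop :=
  AEStronglyMeasurable f MeasureTheory.volume ∧
  ∃ C : ℝ, ∀ ξ : ℝ,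
    (∫⁻ t in Set.Icc ξ (ξ + 1), ENNReal.ofReal (d (f t) x₀ ^ p)) ≤ ENNReal.ofReal C

/-- A set `T ⊆ ℝ` is relatively dense. -/
def RelDense (T : Set ℝ) : Prop := ∃ a > 0, ∀ ξ : ℝ, (Set.Icc ξ (ξ + a) ∩ T).Nonempty

/-- The set of `(ε, D^{(d)}_{p,l})`-almost periods of `f`. -/
def APeriodsL {α : Type*} (d : α → α → ℝ) (p l ε : ℝ) (f : ℝ → α) : Set ℝ :=
  {τ | weylD d p l f (fun t => f (t + τ)) < ENNReal.ofReal ε}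

/-- The set `P^{(d)}_p(ε; f)` of `(ε, D^{(d)}_p)`-almost periods of `f`. -/
def APeriods {α : Type*} (d : α → α → ℝ) (p ε : ℝ) (f : ℝ → α) : Set ℝ :=
  {τ | weylDinf d p f (fun t => f (t + τ)) < ENNReal.ofReal ε}

/-- Membership in the space `W_p(ℝ, α)` of Weyl almost periodic functions of order `p`
w.r.t. the distance `d` (with distinguished point `x₀`). -/
def MemWp {α : Type*} [TopologicalSpace α] (d : α → α → ℝ) (p : ℝ) (x₀ : α)
    (f : ℝ → α) : Prop :=
  MemMp d p x₀ f ∧ ∀ ε > 0, ∃ l > 0, RelDense (APeriodsL d p l ε f)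

/-- The module `Mod f`: the additive group of all `λ ∈ ℝ` such that `e^{iλτ_j} → 1`
for every `f`-returning sequence `{τ_j}` (a sequence with `D^{(d)}_1(f, f(·+τ_j)) → 0`,
where `d` is the relevant bounded distance). -/
def WMod {α : Type*} (d : α → α → ℝ) (f : ℝ → α) : Set ℝ :=
  {lam : ℝ | ∀ τ : ℕ → ℝ,
    Tendsto (fun j => weylDinf d 1 f (fun t => f (t + τ j))) atTop (nhds 0) →
    Tendsto (fun j => Complex.exp (Complex.I * ((lam * τ j : ℝ) : ℂ))) atTop (nhds 1)}

/-- `κ_W(T) = lim_{l → +∞} sup_ξ (1/l) meas([ξ, ξ+l] ∩ T)` (formalized as a `limsup`). -/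
def kappaW (T : Set ℝ) : ℝ≥0∞ :=
  Filter.limsup (fun l : ℝ => ⨆ ξ : ℝ,
    ENNReal.ofReal (1 / l) * MeasureTheory.volume (Set.Icc ξ (ξ + l) ∩ T)) Filter.atTop

/-- Membership in `M*_p(ℝ, α)`. -/
def MemMpStar {α : Type*} [TopologicalSpace α] (d : α → α → ℝ) (p : ℝ) (x₀ : α)
    (f : ℝ → α) : Prop :=
  MemMp d p x₀ f ∧
  ∀ ε > 0, ∃ δ > 0, ∀ T : Set ℝ, MeasurableSet T → kappaW T < ENNReal.ofReal δ →
    Filter.limsup (fun l : ℝ => ⨆ ξ : ℝ, ENNReal.ofReal (1 / l) *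
        ∫⁻ t in Set.Icc ξ (ξ + l) ∩ T, ENNReal.ofReal (d (f t) x₀ ^ p)) Filter.atTop
      < ENNReal.ofReal ε

/-- Distance from a point to a set w.r.t. the distance `d`, valued in `ℝ≥0∞`
(`∞` for the empty set). -/
def dInfDist {α : Type*} (d : α → α → ℝ) (x : α) (K : Set α) : ℝ≥0∞ :=
  ⨅ y ∈ K, ENNReal.ofReal (d x y)

/-- Membership in `W̃_p(ℝ, α)`: conditions 1) (relatively dense sets of
`(ε, D^{(d)}_p)`-almost periods) and 2) (approximate compactness of values). -/
def MemWpTilde {α : Type*} [TopologicalSpace α] (d : α → α → ℝ) (p : ℝ) (x₀ : α)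
    (f : ℝ → α) : Prop :=
  MemMp d p x₀ f ∧
  (∀ ε > 0, RelDense (APeriods d p ε f)) ∧
  (∀ ε > 0, ∀ δ > 0, ∃ K : Set α, IsCompact K ∧
      kappaW {t | ENNReal.ofReal ε ≤ dInfDist d (f t) K} < ENNReal.ofReal δ)

/-- The support of a Borel measure on a topological space. -/
def measSupport {α : Type*} [TopologicalSpace α] [MeasurableSpace α]
    (μ : Measure α) : Set α :=
  {x | ∀ V : Set α, IsOpen V → x ∈ V → 0 < μ V}

/-- `r_δ(x, μ) = inf { r > 0 : μ[U_r(x)] > δ }`. -/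
def rdelta {α : Type*} [PseudoMetricSpace α] [MeasurableSpace α]
    (x : α) (μ : Measure α) (δ : ℝ) : ℝ :=
  sInf {r : ℝ | 0 < r ∧ ENNReal.ofReal δ < μ (Metric.ball x r)}

/-- The Lévy–Prokhorov distance on Borel probability measures. -/
def lpDist {α : Type*} [MeasurableSpace α] [PseudoEMetricSpace α] :
    ProbabilityMeasure α → ProbabilityMeasure α → ℝ :=
  fun μ ν => MeasureTheory.levyProkhorovDist (μ : Measure α) (ν : Measure α)

end

/-!
Everything is read off the functional `weylMean`, the upper mean over long windows.
Membership in `M*_p` says that `ρ^p(f, x₀)` is uniformly integrable for this functional, and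
translation invariance makes it so for all translates of `f` at once. The theorem is then a Vitali
argument: by Chebyshev, a small `D^{(ρ')}_1(f, f(· + τ))` forces `ρ(f(t), f(t + τ)) < η` off a set
`T` with `κ_W(T)` small. Off `T` the mean of `ρ^p` is at most `η^p`, and on `T` the triangle
inequality through `x₀` bounds it by the means of `ρ^p(f, x₀)` and `ρ^p(f(· + τ), x₀)` over `T`.
-/

section ENNRealInequalities

theorem ennreal_limsup_add_le {α : Type*} {l : Filter α} (u v : α → ℝ≥0∞) :
    limsup (fun a => u a + v a) l ≤ limsup u l + limsup v l := by
  refine ENNReal.le_of_forall_pos_le_add fun ε hε hfin => ?_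
  obtain ⟨hu, hv⟩ := ENNReal.add_lt_top.1 hfin
  have hε2 : (ε / 2 : ℝ≥0∞) ≠ 0 := by simpa using hε.ne'
  refine limsup_le_of_le (by isBoundedDefault) ?_
  filter_upwards [eventually_lt_of_limsup_lt (ENNReal.lt_add_right hu.ne hε2),
    eventually_lt_of_limsup_lt (ENNReal.lt_add_right hv.ne hε2)] with a hua hva
  calc u a + v a ≤ (limsup u l + ε / 2) + (limsup v l + ε / 2) := add_le_add hua.le hva.le
    _ = limsup u l + limsup v l + ε := by rw [add_add_add_comm, ENNReal.add_halves]

theorem add_rpow_le_two_rpow_mul_add {p : ℝ} (hp : 0 ≤ p) (a b : ℝ≥0∞) :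
    (a + b) ^ p ≤ 2 ^ p * (a ^ p + b ^ p) :=
  calc (a + b) ^ p ≤ (2 * max a b) ^ p := by
        rw [two_mul]
        gcongr
        exacts [le_max_left a b, le_max_right a b]
    _ = 2 ^ p * max (a ^ p) (b ^ p) := by
        rw [ENNReal.mul_rpow_of_nonneg _ _ hp, (ENNReal.monotone_rpow_of_nonneg hp).map_max]
    _ ≤ 2 ^ p * (a ^ p + b ^ p) := by
        gcongr
        exact max_le le_self_add le_add_self

theorem exists_pos_lt_one_rpow_add_lt {p : ℝ} (hp : 0 < p) {ε : ℝ≥0∞} (hε : 0 < ε) :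
    ∃ η : ℝ≥0∞, 0 < η ∧ η < 1 ∧ η ^ p + 2 ^ p * (η + η) < ε := by
  have hcont : Continuous fun η : ℝ≥0∞ => η ^ p + 2 ^ p * (η + η) :=
    ENNReal.continuous_rpow_const.add <| (ENNReal.continuous_const_mul
      (ENNReal.rpow_ne_top_of_nonneg hp.le ENNReal.ofNat_ne_top)).comp
        (continuous_id.add continuous_id)
  have hlt : ∀ᶠ η in 𝓝 (0 : ℝ≥0∞), η ^ p + 2 ^ p * (η + η) < ε :=
    hcont.tendsto 0 |>.eventually_lt_const (by simpa [hp] using hε)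
  have hlt' : ∀ᶠ η in 𝓝[>] (0 : ℝ≥0∞), η < 1 ∧ η ^ p + 2 ^ p * (η + η) < ε :=
    eventually_nhdsWithin_of_eventually_nhds ((eventually_lt_nhds one_pos).and hlt)
  obtain ⟨η, hη0, hη1, hη⟩ := (eventually_mem_nhdsWithin.and hlt').exists
  exact ⟨η, hη0, hη1, hη⟩

end ENNRealInequalities

/-- The supremum over all windows `[ξ, ξ + l]` of the mean of `F` on the window, as in
`D_{p,l}`. -/
noncomputable def windowMean (F : ℝ → ℝ≥0∞) (l : ℝ) : ℝ≥0∞ :=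
  ⨆ ξ : ℝ, ENNReal.ofReal (1 / l) * ∫⁻ t in Set.Icc ξ (ξ + l), F t

/-- The Weyl upper mean of `F`, the common form of the limits defining `D_p`, `κ_W` and `M*_p`.
As in `weylDinf` and `kappaW`, the limit as `l → +∞` is encoded as a `limsup`. -/
noncomputable def weylMean (F : ℝ → ℝ≥0∞) : ℝ≥0∞ :=
  limsup (windowMean F) atTop

section WeylMean

variable {F G : ℝ → ℝ≥0∞} {c : ℝ≥0∞} {T : Set ℝ}

theorem windowMean_mono_ae (h : F ≤ᵐ[volume] G) (l : ℝ) : windowMean F l ≤ windowMean G l :=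
  iSup_mono fun _ => mul_le_mul_right (lintegral_mono_ae (ae_restrict_of_ae h)) _

theorem windowMean_add_le (hF : AEMeasurable F) (G : ℝ → ℝ≥0∞) (l : ℝ) :
    windowMean (fun t => F t + G t) l ≤ windowMean F l + windowMean G l := by
  simp only [windowMean, lintegral_add_left' hF.restrict, mul_add]
  exact iSup_add_le _ _

theorem windowMean_const_mul (hc : c ≠ ∞) (F : ℝ → ℝ≥0∞) (l : ℝ) :
    windowMean (fun t => c * F t) l = c * windowMean F l := by
  simp only [windowMean, lintegral_const_mul' _ _ hc, ENNReal.mul_iSup, mul_left_comm c]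

theorem windowMean_const (c : ℝ≥0∞) {l : ℝ} (hl : 0 < l) : windowMean (fun _ => c) l = c := by
  have hl' : ENNReal.ofReal (1 / l) * ENNReal.ofReal l = 1 := by
    rw [← ENNReal.ofReal_mul (by positivity), one_div_mul_cancel hl.ne', ENNReal.ofReal_one]
  simp only [windowMean, setLIntegral_const, Real.volume_Icc, add_sub_cancel_left,
    mul_left_comm _ c, hl', mul_one, ciSup_const]

theorem windowMean_comp_add_right (F : ℝ → ℝ≥0∞) (τ l : ℝ) :
    windowMean (fun t => F (t + τ)) l = windowMean F l := by
  unfold windowMean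
  refine (Equiv.addRight τ).iSup_congr fun ξ => ?_
  rw [Equiv.coe_addRight, ← (measurePreserving_add_right volume τ).setLIntegral_comp_preimage_emb
    (measurableEmbedding_addRight τ), Set.preimage_add_const_Icc, add_right_comm ξ τ l,
    add_sub_cancel_right, add_sub_cancel_right]

theorem weylMean_mono_ae (h : F ≤ᵐ[volume] G) : weylMean F ≤ weylMean G :=
  limsup_le_limsup (.of_forall (windowMean_mono_ae h))

theorem weylMean_mono (h : F ≤ G) : weylMean F ≤ weylMean G :=
  weylMean_mono_ae (.of_forall h)

theorem weylMean_congr_ae (h : F =ᵐ[volume] G) : weylMean F = weylMean G :=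
  le_antisymm (weylMean_mono_ae h.le) (weylMean_mono_ae h.symm.le)

theorem weylMean_add_le (hF : AEMeasurable F) (G : ℝ → ℝ≥0∞) :
    weylMean (fun t => F t + G t) ≤ weylMean F + weylMean G :=
  (limsup_le_limsup (.of_forall (windowMean_add_le hF G))).trans (ennreal_limsup_add_le _ _)

theorem weylMean_const_mul (hc : c ≠ ∞) (F : ℝ → ℝ≥0∞) :
    weylMean (fun t => c * F t) = c * weylMean F := by
  simp only [weylMean, funext (windowMean_const_mul hc F), ENNReal.limsup_const_mul_of_ne_top hc]

theorem weylMean_const (c : ℝ≥0∞) : weylMean (fun _ => c) = c :=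
  (limsup_congr ((eventually_gt_atTop 0).mono fun _ => windowMean_const c)).trans
    (limsup_const c)

theorem weylMean_comp_add_right (F : ℝ → ℝ≥0∞) (τ : ℝ) :
    weylMean (fun t => F (t + τ)) = weylMean F :=
  limsup_congr (.of_forall (windowMean_comp_add_right F τ))

theorem weylMean_indicator_comp_add_right (T : Set ℝ) (F : ℝ → ℝ≥0∞) (τ : ℝ) :
    weylMean (T.indicator fun t => F (t + τ)) = weylMean (((· + -τ) ⁻¹' T).indicator F) := by
  have hT : (· + τ) ⁻¹' ((· + -τ) ⁻¹' T) = T := by ext t; simp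
  nth_rewrite 1 [← hT]
  exact weylMean_comp_add_right (((· + -τ) ⁻¹' T).indicator F) τ

theorem weylMean_indicator (hT : NullMeasurableSet T) (F : ℝ → ℝ≥0∞) :
    weylMean (T.indicator F) = limsup (fun l : ℝ => ⨆ ξ : ℝ, ENNReal.ofReal (1 / l) *
      ∫⁻ t in Set.Icc ξ (ξ + l) ∩ T, F t) atTop := by
  have hT' (ξ l : ℝ) : NullMeasurableSet T (volume.restrict (Set.Icc ξ (ξ + l))) :=
    hT.mono_ac Measure.absolutelyContinuous_restrict
  unfold weylMean windowMean
  simp only [lintegral_indicator₀ (hT' _ _), Measure.restrict_restrict₀ (hT' _ _),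
    Set.inter_comm T]

theorem kappaW_eq_weylMean_indicator (hT : NullMeasurableSet T) :
    kappaW T = weylMean (T.indicator 1) := by
  simp only [weylMean_indicator hT, Pi.one_apply, setLIntegral_one, kappaW]

theorem kappaW_congr_ae {S : Set ℝ} (h : S =ᵐ[volume] T) : kappaW S = kappaW T := by
  have hvol (ξ l : ℝ) : volume (Set.Icc ξ (ξ + l) ∩ S) = volume (Set.Icc ξ (ξ + l) ∩ T) :=
    measure_congr (ae_eq_rfl.inter h)
  simp only [kappaW, hvol]

theorem kappaW_preimage_add_right (T : Set ℝ) (τ : ℝ) :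
    kappaW ((· + τ) ⁻¹' T) = kappaW T := by
  refine limsup_congr (.of_forall fun l => (Equiv.addRight τ).iSup_congr fun ξ => ?_)
  rw [Equiv.coe_addRight, ← measure_preimage_add_right volume τ (_ ∩ T), Set.preimage_inter,
    Set.preimage_add_const_Icc, add_right_comm ξ τ l, add_sub_cancel_right, add_sub_cancel_right]

theorem mul_kappaW_ge_le_weylMean (hF : AEMeasurable F) (hc : c ≠ ∞) :
    c * kappaW {t | c ≤ F t} ≤ weylMean F := by
  rw [kappaW_eq_weylMean_indicator (nullMeasurableSet_le aemeasurable_const hF),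
    ← weylMean_const_mul hc]
  refine weylMean_mono fun t => ?_
  by_cases ht : c ≤ F t <;> simp [ht]

theorem weylMean_rpow_le_of_le_add {H : ℝ → ℝ≥0∞} {p : ℝ} (hp : 0 ≤ p) (hF : AEMeasurable F)
    (hH : AEMeasurable H) (hHFG : ∀ t, H t ≤ F t + G t) (c : ℝ≥0∞) :
    weylMean (fun t => H t ^ p) ≤ c ^ p + 2 ^ p *
      (weylMean ({t | c ≤ H t}.indicator fun t => F t ^ p) +
        weylMean ({t | c ≤ H t}.indicator fun t => G t ^ p)) := by
  have hT : NullMeasurableSet {t | c ≤ H t} := nullMeasurableSet_le aemeasurable_const hH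
  set T : Set ℝ := {t | c ≤ H t}
  set FT := T.indicator fun t => F t ^ p
  set GT := T.indicator fun t => G t ^ p
  have hpointwise : ∀ t, H t ^ p ≤ c ^ p + 2 ^ p * (FT t + GT t) := fun t => by
    by_cases ht : t ∈ T
    · simp only [FT, GT, Set.indicator_of_mem ht]
      calc H t ^ p ≤ (F t + G t) ^ p := by gcongr; exact hHFG t
        _ ≤ 2 ^ p * (F t ^ p + G t ^ p) := add_rpow_le_two_rpow_mul_add hp _ _
        _ ≤ _ := le_add_self
    · calc H t ^ p ≤ c ^ p := by gcongr; exact (not_le.1 ht).le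
        _ ≤ _ := le_self_add
  calc weylMean (fun t => H t ^ p)
      ≤ weylMean (fun t => c ^ p + 2 ^ p * (FT t + GT t)) := weylMean_mono hpointwise
    _ ≤ c ^ p + 2 ^ p * weylMean (fun t => FT t + GT t) := by
      grw [weylMean_add_le aemeasurable_const, weylMean_const, weylMean_const_mul
        (ENNReal.rpow_ne_top_of_nonneg hp ENNReal.ofNat_ne_top)]
    _ ≤ c ^ p + 2 ^ p * (weylMean FT + weylMean GT) := by
      grw [weylMean_add_le ((hF.pow_const p).indicator₀ hT)]

end WeylMean

/-- Uniform integrability of a family of functions with respect to the Weyl mean: the condition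
in the definition of `M*_p`, with `δ` uniform over the family. Null-measurable sets are admitted
because the level sets of a.e. strongly measurable functions are only null-measurable. -/
def WeylUnifIntegrable {ι : Type*} (F : ι → ℝ → ℝ≥0∞) : Prop :=
  ∀ ε > 0, ∃ δ > 0, ∀ i, ∀ T : Set ℝ, NullMeasurableSet T → kappaW T < δ →
    weylMean (T.indicator (F i)) < ε

theorem MemMpStar.weylUnifIntegrable_translates {α : Type*} [TopologicalSpace α]
    {d : α → α → ℝ} {p : ℝ} {x₀ : α} {f : ℝ → α} (hf : MemMpStar d p x₀ f) :
    WeylUnifIntegrable fun τ t => ENNReal.ofReal (d (f (t + τ)) x₀ ^ p) := by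
  intro ε hε
  obtain ⟨r, -, hr0, hrε⟩ := ENNReal.lt_iff_exists_real_btwn.1 hε
  obtain ⟨δ, hδ, hfδ⟩ := hf.2 r (ENNReal.ofReal_pos.1 hr0)
  refine ⟨ENNReal.ofReal δ, ENNReal.ofReal_pos.2 hδ, fun τ T hT hTδ => ?_⟩
  set F : ℝ → ℝ≥0∞ := fun t => ENNReal.ofReal (d (f t) x₀ ^ p)
  have hT' : NullMeasurableSet ((· + -τ) ⁻¹' T) :=
    hT.preimage (quasiMeasurePreserving_add_right volume (-τ))
  obtain ⟨S, -, hS, hST⟩ := hT'.exists_measurable_superset_ae_eq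
  have hSδ : kappaW S < ENNReal.ofReal δ := by
    rwa [kappaW_congr_ae hST, kappaW_preimage_add_right]
  calc weylMean (T.indicator fun t => F (t + τ))
      = weylMean (((· + -τ) ⁻¹' T).indicator F) := weylMean_indicator_comp_add_right T F τ
    _ = weylMean (S.indicator F) := weylMean_congr_ae (indicator_ae_eq_of_ae_eq_set hST.symm)
    _ < ENNReal.ofReal r := by
        rw [weylMean_indicator hS.nullMeasurableSet]
        exact hfδ S hS hSδ
    _ < ε := hrε

theorem WeylUnifIntegrable.exists_forall_weylMean_rpow_lt {ι : Type*} {F : ι → ℝ → ℝ≥0∞} {p : ℝ}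
    (hF : WeylUnifIntegrable fun i t => F i t ^ p) (hFm : ∀ i, AEMeasurable (F i)) (hp : 0 < p)
    {ε : ℝ≥0∞} (hε : 0 < ε) :
    ∃ δ > 0, ∀ i j, ∀ H : ℝ → ℝ≥0∞, AEMeasurable H → (∀ t, H t ≤ F i t + F j t) →
      weylMean (fun t => min 1 (H t)) < δ → weylMean (fun t => H t ^ p) < ε := by
  obtain ⟨η, hη0, hη1, hηε⟩ := exists_pos_lt_one_rpow_add_lt hp hε
  obtain ⟨δ, hδ, hFδ⟩ := hF η hη0
  refine ⟨η * δ, ENNReal.mul_pos hη0.ne' hδ.ne', fun i j H hH hHF hHδ => ?_⟩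
  have hT : NullMeasurableSet {t | η ≤ H t} := nullMeasurableSet_le aemeasurable_const hH
  have hTδ : kappaW {t | η ≤ H t} < δ := by
    have hchebyshev : η * kappaW {t | η ≤ H t} ≤ weylMean fun t => min 1 (H t) := by
      have hlevel : {t | η ≤ H t} = {t | η ≤ min 1 (H t)} := by simp [hη1.le]
      rw [hlevel]
      exact mul_kappaW_ge_le_weylMean (aemeasurable_const.min hH) hη1.ne_top
    exact lt_of_mul_lt_mul_left' (hchebyshev.trans_lt hHδ)
  calc weylMean (fun t => H t ^ p)
      ≤ η ^ p + 2 ^ p * (weylMean ({t | η ≤ H t}.indicator fun t => F i t ^ p) +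
          weylMean ({t | η ≤ H t}.indicator fun t => F j t ^ p)) :=
        weylMean_rpow_le_of_le_add hp.le (hFm i) hH hHF η
    _ ≤ η ^ p + 2 ^ p * (η + η) := by
        gcongr
        exacts [(hFδ i _ hT hTδ).le, (hFδ j _ hT hTδ).le]
    _ < ε := hηε

section AlmostPeriods

theorem weylDinf_eq_weylMean_rpow {α : Type*} (d : α → α → ℝ) {p : ℝ} (hp : 0 < p)
    (f g : ℝ → α) :
    weylDinf d p f g = weylMean (fun t => ENNReal.ofReal (d (f t) (g t) ^ p)) ^ p⁻¹ := by
  rw [← one_div]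
  exact ((ENNReal.orderIsoRpow (1 / p) (by positivity)).limsup_apply).symm

variable {U : Type*} [PseudoMetricSpace U]

theorem ofReal_dist_rpow {p : ℝ} (hp : 0 ≤ p) (x y : U) :
    ENNReal.ofReal (dist x y ^ p) = edist x y ^ p := by
  rw [edist_dist, ENNReal.ofReal_rpow_of_nonneg dist_nonneg hp]

theorem mem_APeriods_dist {p : ℝ} (hp : 0 < p) {ε : ℝ} {f : ℝ → U} {τ : ℝ} :
    τ ∈ APeriods dist p ε f ↔
      weylMean (fun t => edist (f t) (f (t + τ)) ^ p) < ENNReal.ofReal ε ^ p := by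
  simp only [APeriods, Set.mem_ofPred_eq, weylDinf_eq_weylMean_rpow _ hp, ofReal_dist_rpow hp.le,
    ENNReal.rpow_inv_lt_iff hp]

theorem mem_APeriods_bdist_one {ε : ℝ} {f : ℝ → U} {τ : ℝ} :
    τ ∈ APeriods bdist 1 ε f ↔
      weylMean (fun t => min 1 (edist (f t) (f (t + τ)))) < ENNReal.ofReal ε := by
  simp only [APeriods, Set.mem_ofPred_eq, weylDinf_eq_weylMean_rpow _ one_pos, bdist,
    Real.rpow_one, inv_one, ENNReal.rpow_one, ENNReal.ofReal_min, ENNReal.ofReal_one, edist_dist]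

end AlmostPeriods

theorem weyl_tilde_almost_periods_general {U : Type*} [PseudoMetricSpace U] (x₀ : U)
    (p : ℝ) (hp : 0 < p) (f : ℝ → U) (hfstar : MemMpStar dist p x₀ f) :
    ∀ ε' > (0 : ℝ), ∃ ε > (0 : ℝ),
      APeriods bdist 1 ε f ⊆ APeriods dist p ε' f := by
  intro ε' hε'
  have hfm (τ : ℝ) : AEStronglyMeasurable (fun t => f (t + τ)) :=
    hfstar.1.1.comp_quasiMeasurePreserving (quasiMeasurePreserving_add_right volume τ)
  have hui : WeylUnifIntegrable fun τ t => edist (f (t + τ)) x₀ ^ p := by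
    simpa only [ofReal_dist_rpow hp.le] using hfstar.weylUnifIntegrable_translates
  obtain ⟨δ, hδ, hsmall⟩ := hui.exists_forall_weylMean_rpow_lt
    (fun τ => (hfm τ).edist aestronglyMeasurable_const) hp
    (ENNReal.rpow_pos (ENNReal.ofReal_pos.2 hε') ENNReal.ofReal_ne_top)
  obtain ⟨ε, -, hε0, hεδ⟩ := ENNReal.lt_iff_exists_real_btwn.1 hδ
  refine ⟨ε, ENNReal.ofReal_pos.1 hε0, fun τ hτ => (mem_APeriods_dist hp).2 ?_⟩
  exact hsmall 0 τ _ (hfstar.1.1.edist (hfm τ))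
    (fun t => by simpa using edist_triangle_right (f t) (f (t + τ)) x₀)
    ((mem_APeriods_bdist_one.1 hτ).trans hεδ)

/-- **Almost periods of functions in `W̃(ℝ,U) ∩ M*_p(ℝ,U)`.**
If `f ∈ W̃(ℝ,U) ∩ M*_p(ℝ,U)`, then for every `ε' > 0` there is `ε > 0` such that
`P^{(ρ)}_p(ε'; f) ⊇ P^{(ρ')}₁(ε; f)`: every `(ε, D^{(ρ')}₁)`-almost period of `f` is an
`(ε', D^{(ρ)}_p)`-almost period of `f`. -/
theorem weyl_tilde_almost_periods {U : Type*} [MetricSpace U] [CompleteSpace U] (x₀ : U)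
    (p : ℝ) (hp : 1 ≤ p) (f : ℝ → U)
    (hf : MemWpTilde bdist 1 x₀ f) (hfstar : MemMpStar dist p x₀ f) :
    ∀ ε' > (0 : ℝ), ∃ ε > (0 : ℝ),
      APeriods bdist 1 ε f ⊆ APeriods dist p ε' f := by
  exact weyl_tilde_almost_periods_general x₀ p (one_pos.trans_le hp) f hfstar
end

section
/- Let U = ℝⁿ with the Euclidean metric |·|. Then every function f ∈ M_1(ℝ, ℝⁿ) satisfies the compactness condition 2) in the definition of W̃_p: for any ε, δ > 0 there exists a compact set K_{ε,δ} ⊆ ℝⁿ such that κ_W({ t ∈ ℝ : dist(f(t), K_{ε,δ}) ≥ ε }) < δ. -/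
open MeasureTheory Filter Topology TopologicalSpace
open scoped ENNReal Pointwise

/-!
By Markov's inequality on unit intervals, `{t | R < dist (f t) x₀}` occupies at most a fraction
`C / R ^ p` of each of them, where `C` bounds the unit-interval integrals of `dist (f t) x₀ ^ p`.
Covering `[ξ, ξ + l]` by `⌈l⌉₊` unit intervals transfers this bound to `κ_W`, since `⌈l⌉₊ / l → 1`.
As `R → ∞` it tends to `0`, and closed balls of a proper space are compact.
-/

theorem kappaW_mono {S T : Set ℝ} (h : S ⊆ T) : kappaW S ≤ kappaW T := by
  refine limsup_le_limsup (.of_forall fun l => iSup_mono fun ξ => ?_)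
  gcongr

theorem measure_Icc_add_natCast_le {μ : Measure ℝ} {B : ℝ≥0∞}
    (h : ∀ ξ, μ (Set.Icc ξ (ξ + 1)) ≤ B) (ξ : ℝ) {n : ℕ} (hn : 1 ≤ n) :
    μ (Set.Icc ξ (ξ + n)) ≤ n * B := by
  induction n, hn using Nat.le_induction with
  | base => simpa using h ξ
  | succ n _ ih =>
    calc μ (Set.Icc ξ (ξ + (n + 1 : ℕ)))
        ≤ μ (Set.Icc ξ (ξ + n) ∪ Set.Icc (ξ + n) (ξ + n + 1)) := by
          push_cast
          rw [← add_assoc]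
          exact measure_mono Set.Icc_subset_Icc_union_Icc
      _ ≤ n * B + B := (measure_union_le _ _).trans (add_le_add ih (h _))
      _ = (n + 1 : ℕ) * B := by push_cast; ring

theorem kappaW_le_of_forall_volume_Icc_inter_le {S : Set ℝ} {B : ℝ≥0∞}
    (h : ∀ ξ, volume (Set.Icc ξ (ξ + 1) ∩ S) ≤ B) : kappaW S ≤ B := by
  have hceil : Tendsto (fun l : ℝ => ENNReal.ofReal (⌈l⌉₊ / l) * B) atTop (𝓝 B) := by
    simpa using ENNReal.Tendsto.mul_const
      (ENNReal.tendsto_ofReal (tendsto_nat_ceil_div_atTop (R := ℝ))) (Or.inl (by simp))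
  rw [← hceil.limsup_eq]
  refine limsup_le_limsup ?_
  filter_upwards [eventually_gt_atTop 0] with l hl
  refine iSup_le fun ξ => ?_
  have hvol : volume (Set.Icc ξ (ξ + l) ∩ S) ≤ ⌈l⌉₊ * B := by
    simp only [← Measure.restrict_apply measurableSet_Icc] at h ⊢
    calc volume.restrict S (Set.Icc ξ (ξ + l))
        ≤ volume.restrict S (Set.Icc ξ (ξ + ⌈l⌉₊)) := by gcongr; exact Nat.le_ceil l
      _ ≤ ⌈l⌉₊ * B := measure_Icc_add_natCast_le h ξ (Nat.ceil_pos.2 hl)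
  calc ENNReal.ofReal (1 / l) * volume (Set.Icc ξ (ξ + l) ∩ S)
      ≤ ENNReal.ofReal (1 / l) * (⌈l⌉₊ * B) := by gcongr
    _ = ENNReal.ofReal (⌈l⌉₊ / l) * B := by
      rw [← mul_assoc, ← ENNReal.ofReal_natCast, ← ENNReal.ofReal_mul (by positivity),
        one_div_mul_eq_div]

theorem kappaW_setOf_ge_le_div {g : ℝ → ℝ≥0∞} (hg : AEMeasurable g) {C : ℝ≥0∞}
    (hC : ∀ ξ, ∫⁻ t in Set.Icc ξ (ξ + 1), g t ≤ C) {c : ℝ≥0∞} (hc : c ≠ 0) (hc' : c ≠ ∞) :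
    kappaW {t | c ≤ g t} ≤ C / c := by
  refine kappaW_le_of_forall_volume_Icc_inter_le fun ξ => ?_
  calc volume (Set.Icc ξ (ξ + 1) ∩ {t | c ≤ g t})
      = volume.restrict (Set.Icc ξ (ξ + 1)) {t | c ≤ g t} := by
        rw [Measure.restrict_apply' measurableSet_Icc, Set.inter_comm]
    _ ≤ (∫⁻ t in Set.Icc ξ (ξ + 1), g t) / c := meas_ge_le_lintegral_div hg.restrict hc hc'
    _ ≤ C / c := by gcongr; exact hC ξ

theorem dInfDist_eq_zero_of_mem {α : Type*} {d : α → α → ℝ} {x : α} (hd : d x x = 0)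
    {K : Set α} (hx : x ∈ K) : dInfDist d x K = 0 :=
  nonpos_iff_eq_zero.1 <| (iInf₂_le x hx).trans_eq (by simp [hd])

theorem kappaW_setOf_le_dInfDist_le {α : Type*} {d : α → α → ℝ} (hd : ∀ x, d x x = 0)
    (f : ℝ → α) (K : Set α) {ε : ℝ} (hε : 0 < ε) :
    kappaW {t | ENNReal.ofReal ε ≤ dInfDist d (f t) K} ≤ kappaW (f ⁻¹' Kᶜ) := by
  refine kappaW_mono fun t ht hK => (ENNReal.ofReal_pos.2 hε).not_ge ?_
  rwa [Set.mem_ofPred_eq, dInfDist_eq_zero_of_mem (hd _) hK] at ht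

section PseudoMetricSpace

variable {α : Type*} [PseudoMetricSpace α] {p : ℝ} {x₀ : α} {f : ℝ → α}

theorem MemMp.tendsto_kappaW_preimage_compl_closedBall (hp : 0 < p) (hf : MemMp dist p x₀ f) :
    Tendsto (fun R => kappaW (f ⁻¹' (Metric.closedBall x₀ R)ᶜ)) atTop (𝓝 0) := by
  obtain ⟨hmeas, C, hC⟩ := hf
  have hbound : Tendsto (fun R : ℝ => ENNReal.ofReal C / ENNReal.ofReal (R ^ p)) atTop (𝓝 0) := by
    simpa using ENNReal.Tendsto.const_div
      (ENNReal.tendsto_ofReal_atTop.comp (tendsto_rpow_atTop hp)) (Or.inr ENNReal.ofReal_ne_top)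
  refine tendsto_of_tendsto_of_tendsto_of_le_of_le' tendsto_const_nhds hbound
    (.of_forall fun _ => zero_le) ?_
  filter_upwards [eventually_gt_atTop 0] with R hR
  have hsub : f ⁻¹' (Metric.closedBall x₀ R)ᶜ ⊆
      {t | ENNReal.ofReal (R ^ p) ≤ ENNReal.ofReal (dist (f t) x₀ ^ p)} := fun t ht => by
    have hRt : R < dist (f t) x₀ := by simpa using ht
    change ENNReal.ofReal (R ^ p) ≤ ENNReal.ofReal (dist (f t) x₀ ^ p)
    gcongr
  have hdist : AEMeasurable fun t => ENNReal.ofReal (dist (f t) x₀ ^ p) :=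
    ((hmeas.dist aestronglyMeasurable_const).aemeasurable.pow_const p).ennreal_ofReal
  have hRp : ENNReal.ofReal (R ^ p) ≠ 0 := (ENNReal.ofReal_pos.2 (by positivity)).ne'
  exact (kappaW_mono hsub).trans (kappaW_setOf_ge_le_div hdist hC hRp ENNReal.ofReal_ne_top)

theorem weyl_tilde_compactness_condition_euclidean_general [ProperSpace α] (hp : 0 < p)
    (hf : MemMp dist p x₀ f) {δ : ℝ≥0∞} (hδ : 0 < δ) :
    ∃ K : Set α, IsCompact K ∧ kappaW (f ⁻¹' Kᶜ) < δ := by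
  obtain ⟨R, hR⟩ := ((hf.tendsto_kappaW_preimage_compl_closedBall hp).eventually_lt_const hδ).exists
  exact ⟨Metric.closedBall x₀ R, isCompact_closedBall x₀ R, hR⟩

end PseudoMetricSpace

/-- **In `U = ℝⁿ`, condition 2) of the definition of `W̃_p` holds for every
`f ∈ M₁(ℝ, ℝⁿ)`:** for any `ε, δ > 0` there is a compact `K ⊆ ℝⁿ` with
`κ_W({t : dist(f(t), K) ≥ ε}) < δ`. -/
theorem weyl_tilde_compactness_condition_euclidean (n : ℕ)
    (x₀ : EuclideanSpace ℝ (Fin n)) (f : ℝ → EuclideanSpace ℝ (Fin n))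
    (hf : MemMp dist 1 x₀ f) :
    ∀ ε > (0 : ℝ), ∀ δ > (0 : ℝ), ∃ K : Set (EuclideanSpace ℝ (Fin n)),
      IsCompact K ∧
      kappaW {t | ENNReal.ofReal ε ≤ dInfDist dist (f t) K} < ENNReal.ofReal δ := by
  intro ε hε δ hδ
  obtain ⟨K, hK, hlt⟩ :=
    weyl_tilde_compactness_condition_euclidean_general one_pos hf (ENNReal.ofReal_pos.2 hδ)
  exact ⟨K, hK, (kappaW_setOf_le_dInfDist_le dist_self f K hε).trans_lt hlt⟩
end

section
/- Let (U,ρ) be a complete metric space, let g ∈ W̃(ℝ,U), and let F ∈ W̃_1(ℝ, (cl U, dist_{ρ'})) be such that T(ε) := P^{(ρ')}_1(ε; g) ∩ P^{(dist_{ρ'})}_1(ε; F) is relatively dense for all ε > 0. If h ∈ W_1(ℝ,ℝ) is a Weyl almost periodic real function whose frequency module Mod h is dense (and countable) in ℝ, then for every ε > 0 the set T(ε) ∩ P^{(ρ_ℝ)}_1(ε; h) is relatively dense. -/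
open MeasureTheory Filter Topology TopologicalSpace
open scoped ENNReal Pointwise

/-!
The sets of almost periods satisfy `P(ε₁) - P(ε₂) ⊆ P(ε₁ + ε₂)`, so it is enough to find, in every
sufficiently long interval, a difference of two elements of `T(ε / 2)` that is an almost period of
`h`. The set `P(ε; h)` is relatively dense and also a neighbourhood of `0`: translation is
continuous in `Lᵖ` over one bounded interval, and almost periods move any interval of length `l`
into a fixed bounded one. Hence finitely many translates of `P(ε / 2; h)` cover `ℝ`, and two
elements of `T(ε / 2)` lying in the same translate differ by an element of `P(ε; h)`.
-/

theorem RelDense.mono {S T : Set ℝ} (hS : RelDense S) (hST : S ⊆ T) : RelDense T := by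
  obtain ⟨a, ha, hS⟩ := hS
  exact ⟨a, ha, fun ξ => (hS ξ).mono (Set.inter_subset_inter_right _ hST)⟩

theorem RelDense.exists_finite_add_sub_eq_univ {P V : Set ℝ} (hP : RelDense P) (hV : V ∈ 𝓝 0) :
    ∃ s : Set ℝ, s.Finite ∧ s + (P - V) = Set.univ := by
  obtain ⟨a, -, hP⟩ := hP
  obtain ⟨δ, hδ, hδV⟩ := Metric.mem_nhds_iff.1 hV
  obtain ⟨s, -, hs, hcover⟩ := (isCompact_Icc (a := (0 : ℝ)) (b := a)).finite_cover_balls hδ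
  refine ⟨s, hs, Set.eq_univ_of_forall fun τ => ?_⟩
  obtain ⟨π, ⟨hπ_ge, hπ_le⟩, hπP⟩ := hP (τ - a)
  have hmem : τ - π ∈ ⋃ σ ∈ s, Metric.ball σ δ := hcover ⟨by linarith, by linarith⟩
  obtain ⟨σ, hσ, hdist⟩ := Set.mem_iUnion₂.1 hmem
  have hsmall : σ - (τ - π) ∈ V :=
    hδV (by rwa [mem_ball_zero_iff, ← dist_eq_norm, ← Metric.mem_ball'])
  exact ⟨σ, hσ, π - (σ - (τ - π)), Set.sub_mem_sub hπP hsmall, by ring⟩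

theorem RelDense.sub_inter_sub {T Q s : Set ℝ} (hT : RelDense T) (hs : s.Finite)
    (hsQ : s + Q = Set.univ) : RelDense ((T - T) ∩ (Q - Q)) := by
  -- Pigeonhole: colour each point by a translate of `Q` containing it. Points of the same colour
  -- differ by an element of `Q - Q`, and one representative in `T` per colour suffices.
  have hcolour : ∀ τ, ∃ σ ∈ s, τ - σ ∈ Q := fun τ => by
    obtain ⟨σ, hσ, q, hq, rfl⟩ := hsQ.ge (Set.mem_univ τ)
    exact ⟨σ, hσ, by simpa using hq⟩
  choose colour hcolour_mem hcolour_sub using hcolour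
  set rep : ℝ → ℝ := Function.invFunOn colour T
  obtain ⟨R, hR, hrep⟩ := (hs.image rep).isBounded.exists_pos_norm_le
  obtain ⟨a, ha, hT⟩ := hT
  refine ⟨a + 2 * R, by positivity, fun ξ => ?_⟩
  obtain ⟨τ, ⟨hτ_ge, hτ_le⟩, hτ⟩ := hT (ξ + R)
  have hsame : ∃ τ' ∈ T, colour τ' = colour τ := ⟨τ, hτ, rfl⟩
  have hbound := abs_le.1 (hrep _ (Set.mem_image_of_mem rep (hcolour_mem τ)))
  refine ⟨τ - rep (colour τ), ⟨by linarith, by linarith⟩,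
    Set.sub_mem_sub hτ (Function.invFunOn_mem hsame), ?_⟩
  have hrep_sub := hcolour_sub (rep (colour τ))
  rw [Function.invFunOn_eq hsame] at hrep_sub
  simpa using Set.sub_mem_sub (hcolour_sub τ) hrep_sub

theorem tendsto_eLpNorm_comp_add_left_sub {G E : Type*} [AddGroup G] [TopologicalSpace G]
    [IsTopologicalAddGroup G] [MeasurableSpace G] [BorelSpace G] [NormedAddCommGroup E]
    {μ : Measure G} [IsLocallyFiniteMeasure μ] [μ.InnerRegularCompactLTTop]
    [μ.IsAddLeftInvariant] {q : ℝ≥0∞} (hq : 1 ≤ q) (hq_top : q ≠ ∞) {f : G → E}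
    (hf : MemLp f q μ) :
    Tendsto (fun σ => eLpNorm (fun t => f (σ + t) - f t) q μ) (𝓝 0) (𝓝 0) := by
  have : Fact (1 ≤ q) := ⟨hq⟩
  have : Fact (q ≠ ∞) := ⟨hq_top⟩
  have hcont : Continuous fun σ : G => edist (DomAddAct.mk σ +ᵥ hf.toLp f) (hf.toLp f) := by
    fun_prop
  have hlim := hcont.tendsto 0
  simpa [DomAddAct.mk_vadd_toLp, Lp.edist_toLp_toLp, Function.comp_def, Pi.sub_def] using hlim

theorem tendsto_eLpNorm_restrict_Icc_comp_add_sub {E : Type*} [NormedAddCommGroup E]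
    {q : ℝ≥0∞} (hq : 1 ≤ q) (hq_top : q ≠ ∞) {f : ℝ → E}
    (hf : ∀ a b, MemLp f q (volume.restrict (Set.Icc a b))) (a b : ℝ) :
    Tendsto (fun σ => eLpNorm (fun t => f (t + σ) - f t) q (volume.restrict (Set.Icc a b)))
      (𝓝 0) (𝓝 0) := by
  set φ : ℝ → E := (Set.Icc (a - 1) (b + 1)).indicator f
  have hφ : MemLp φ q volume := (memLp_indicator_iff_restrict measurableSet_Icc).2 (hf _ _)
  refine tendsto_of_tendsto_of_tendsto_of_le_of_le' tendsto_const_nhds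
    (tendsto_eLpNorm_comp_add_left_sub hq hq_top hφ) (.of_forall fun _ => zero_le) ?_
  filter_upwards [Ioo_mem_nhds neg_one_lt_zero one_pos] with σ hσ
  have heq : ∀ t ∈ Set.Icc a b, f (t + σ) - f t = φ (σ + t) - φ t := fun t ht => by
    have hφ_eq : ∀ u ∈ Set.Icc (a - 1) (b + 1), φ u = f u := fun u hu =>
      Set.indicator_of_mem hu f
    rw [hφ_eq t ⟨by linarith [ht.1], by linarith [ht.2]⟩, add_comm σ t,
      hφ_eq (t + σ) ⟨by linarith [ht.1, hσ.1], by linarith [ht.2, hσ.2]⟩]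
  calc eLpNorm (fun t => f (t + σ) - f t) q (volume.restrict (Set.Icc a b))
      = eLpNorm (fun t => φ (σ + t) - φ t) q (volume.restrict (Set.Icc a b)) :=
        eLpNorm_congr_ae (ae_restrict_of_forall_mem measurableSet_Icc heq)
    _ ≤ eLpNorm (fun t => φ (σ + t) - φ t) q volume := eLpNorm_restrict_le _ _ _ _

/-- A continuous pseudodistance on a topological space. It is a predicate on functions rather than
a `PseudoMetricSpace` instance so that `ρ`, `ρ' = bdist` and `dist_{ρ'} = clDist` are treated alike;
continuity is what makes `t ↦ d (f t) (g t)` measurable for strongly measurable `f` and `g`. -/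
structure IsContinuousPseudoDist {α : Type*} [TopologicalSpace α] (d : α → α → ℝ) : Prop where
  self : ∀ x, d x x = 0
  comm : ∀ x y, d x y = d y x
  triangle : ∀ x y z, d x z ≤ d x y + d y z
  continuous : Continuous (Function.uncurry d)

theorem clDist_eq_toReal_min_edist {α : Type*} [MetricSpace α] (A B : Closeds α) :
    clDist A B = (min 1 (edist A B)).toReal := rfl

namespace IsContinuousPseudoDist

theorem nonneg {α : Type*} [TopologicalSpace α] {d : α → α → ℝ}
    (hd : IsContinuousPseudoDist d) (x y : α) : 0 ≤ d x y := by
  linarith [hd.self x, hd.comm x y, hd.triangle x y x]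

protected theorem dist {α : Type*} [PseudoMetricSpace α] :
    IsContinuousPseudoDist (dist : α → α → ℝ) where
  self := dist_self
  comm := dist_comm
  triangle := dist_triangle
  continuous := continuous_dist

protected theorem bdist {α : Type*} [PseudoMetricSpace α] :
    IsContinuousPseudoDist (bdist : α → α → ℝ) where
  self x := by simp [bdist]
  comm x y := by simp only [bdist, dist_comm x y]
  triangle x y z := by
    grind [bdist, dist_triangle x y z, dist_nonneg (x := x) (y := y), dist_nonneg (x := y) (y := z)]
  continuous := continuous_const.min continuous_dist

protected theorem clDist {α : Type*} [MetricSpace α] :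
    IsContinuousPseudoDist (clDist : Closeds α → Closeds α → ℝ) where
  self A := by simp [clDist_eq_toReal_min_edist]
  comm A B := by simp only [clDist_eq_toReal_min_edist, edist_comm A B]
  triangle A B C := by
    have hfin (x : ℝ≥0∞) : min 1 x ≠ ∞ := ne_top_of_le_ne_top ENNReal.one_ne_top (min_le_left 1 x)
    simp only [clDist_eq_toReal_min_edist]
    rw [← ENNReal.toReal_add (hfin _) (hfin _)]
    refine ENNReal.toReal_mono (ENNReal.add_ne_top.2 ⟨hfin _, hfin _⟩) ?_
    calc min 1 (edist A C)
        ≤ min 1 (edist A B + edist B C) := min_le_min_left 1 (edist_triangle A B C)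
      _ = min 1 (min 1 (edist A B) + min 1 (edist B C)) := min_add_distrib _ _ _
      _ ≤ min 1 (edist A B) + min 1 (edist B C) := min_le_right _ _
  continuous := by
    have hmin : Continuous fun P : Closeds α × Closeds α => min 1 (edist P.1 P.2) := by fun_prop
    exact ENNReal.continuousOn_toReal.comp_continuous hmin fun P =>
      ne_top_of_le_ne_top ENNReal.one_ne_top (min_le_left _ _)

section Kuratowski

variable {α : Type*} [TopologicalSpace α] {d : α → α → ℝ} (hd : IsContinuousPseudoDist d)

/-- The Kuratowski map `x ↦ d(x, ·) - d(x₀, ·)`. It turns `d` into the distance of a normed group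
and `x₀` into `0`, which brings the `Lᵖ` theory to bear on functions with values in `α`. -/
noncomputable def kuratowski (x₀ x : α) : BoundedContinuousFunction α ℝ :=
  .ofNormedAddCommGroup (fun z => d x z - d x₀ z)
    (by have := hd.continuous; fun_prop) (d x x₀) fun z => by
      have h₁ := hd.triangle x x₀ z
      have h₂ := hd.triangle x₀ x z
      rw [hd.comm x₀ x] at h₂
      exact abs_le.2 ⟨by linarith, by linarith⟩

theorem norm_kuratowski_sub (x₀ x y : α) :
    ‖hd.kuratowski x₀ x - hd.kuratowski x₀ y‖ = d x y := by
  have hval : ∀ z, (hd.kuratowski x₀ x - hd.kuratowski x₀ y) z = d x z - d y z := fun z =>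
    sub_sub_sub_cancel_right _ _ _
  refine le_antisymm ((BoundedContinuousFunction.norm_le (hd.nonneg x y)).2 fun z => ?_) ?_
  · have h₁ := hd.triangle x y z
    have h₂ := hd.triangle y x z
    rw [hd.comm y x] at h₂
    rw [hval]
    exact abs_le.2 ⟨by linarith, by linarith⟩
  · calc d x y = (hd.kuratowski x₀ x - hd.kuratowski x₀ y) y := by rw [hval, hd.self, sub_zero]
      _ ≤ _ := (Real.le_norm_self _).trans (BoundedContinuousFunction.norm_coe_le_norm _ y)

theorem norm_kuratowski (x₀ x : α) : ‖hd.kuratowski x₀ x‖ = d x x₀ := by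
  have hzero : hd.kuratowski x₀ x₀ = 0 := by ext; exact sub_self _
  simpa [hzero] using hd.norm_kuratowski_sub x₀ x x₀

theorem continuous_kuratowski (x₀ : α) : Continuous (hd.kuratowski x₀) := by
  refine continuous_iff_continuousAt.2 fun x => tendsto_iff_norm_sub_tendsto_zero.2 ?_
  simp only [norm_kuratowski_sub]
  have hlim := (hd.continuous.comp (Continuous.prodMk_left x)).tendsto x
  simpa [Function.comp_def, hd.self] using hlim

end Kuratowski

theorem aestronglyMeasurable {α X : Type*} [TopologicalSpace α] [MeasurableSpace X] {μ : Measure X}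
    {d : α → α → ℝ} (hd : IsContinuousPseudoDist d) {f g : X → α}
    (hf : AEStronglyMeasurable f μ) (hg : AEStronglyMeasurable g μ) :
    AEStronglyMeasurable (fun t => d (f t) (g t)) μ :=
  hd.continuous.comp_aestronglyMeasurable (hf.prodMk hg)

end IsContinuousPseudoDist

section SupMean

/-- The supremum of the means of `G` over the intervals of length `l`, that is, the `p`-th power of
`D_{p,l}(f, g)` when `G = d(f, g)^p`. -/
noncomputable def supMean (l : ℝ) (G : ℝ → ℝ≥0∞) : ℝ≥0∞ :=
  ⨆ ξ : ℝ, ENNReal.ofReal (1 / l) * ∫⁻ t in Set.Icc ξ (ξ + l), G t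

theorem measurePreserving_add_right_restrict_Icc (l ξ σ : ℝ) :
    MeasurePreserving (· + σ) (volume.restrict (Set.Icc ξ (ξ + l)))
      (volume.restrict (Set.Icc (ξ + σ) (ξ + σ + l))) := by
  have hmp := (measurePreserving_add_right volume σ).restrict_preimage_emb
    (measurableEmbedding_addRight σ) (Set.Icc (ξ + σ) (ξ + σ + l))
  rwa [Set.preimage_add_const_Icc, add_sub_cancel_right, add_right_comm ξ σ l,
    add_sub_cancel_right, add_right_comm ξ l σ] at hmp

theorem supMean_comp_add_right (l σ : ℝ) (G : ℝ → ℝ≥0∞) :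
    supMean l (fun t => G (t + σ)) = supMean l G :=
  (Equiv.addRight σ).iSup_congr fun ξ => by
    rw [(measurePreserving_add_right_restrict_Icc l ξ σ).lintegral_comp_emb
      (measurableEmbedding_addRight σ)]
    rfl

theorem setLIntegral_Icc_natCast_mul_le {G : ℝ → ℝ≥0∞} {l : ℝ} {S : ℝ≥0∞}
    (hS : ∀ ξ, ∫⁻ t in Set.Icc ξ (ξ + l), G t ≤ S) (ξ : ℝ) (n : ℕ) :
    ∫⁻ t in Set.Icc ξ (ξ + n * l), G t ≤ n * S := by
  induction n with
  | zero => simp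
  | succ n ih =>
    have hcover : Set.Icc ξ (ξ + (n + 1 : ℕ) * l) ⊆
        Set.Icc ξ (ξ + n * l) ∪ Set.Icc (ξ + n * l) (ξ + n * l + l) := by
      have hend : ξ + (n + 1 : ℕ) * l = ξ + n * l + l := by push_cast; ring
      rw [hend]
      exact Set.Icc_subset_Icc_union_Icc
    calc ∫⁻ t in Set.Icc ξ (ξ + (n + 1 : ℕ) * l), G t
        ≤ ∫⁻ t in Set.Icc ξ (ξ + n * l) ∪ Set.Icc (ξ + n * l) (ξ + n * l + l), G t :=
          lintegral_mono_set hcover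
      _ ≤ _ := lintegral_union_le _ _ _
      _ ≤ n * S + S := add_le_add ih (hS _)
      _ = (n + 1 : ℕ) * S := by push_cast; ring

theorem setLIntegral_Icc_le_mul_supMean {l : ℝ} (hl : 0 < l) (G : ℝ → ℝ≥0∞) (ξ : ℝ) :
    ∫⁻ t in Set.Icc ξ (ξ + l), G t ≤ ENNReal.ofReal l * supMean l G := by
  calc ∫⁻ t in Set.Icc ξ (ξ + l), G t
      = ENNReal.ofReal l * (ENNReal.ofReal (1 / l) * ∫⁻ t in Set.Icc ξ (ξ + l), G t) := by
        rw [← mul_assoc, ← ENNReal.ofReal_mul hl.le, mul_one_div_cancel hl.ne', ENNReal.ofReal_one,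
          one_mul]
    _ ≤ ENNReal.ofReal l * supMean l G := by
        gcongr
        exact le_iSup (fun ξ : ℝ => ENNReal.ofReal (1 / l) * ∫⁻ t in Set.Icc ξ (ξ + l), G t) ξ

theorem supMean_le_ceil_div_mul {l L : ℝ} (hl : 0 < l) (hL : 0 < L) (G : ℝ → ℝ≥0∞) :
    supMean L G ≤ ENNReal.ofReal (⌈L / l⌉₊ / (L / l)) * supMean l G := by
  refine iSup_le fun ξ => ?_
  have hle : L ≤ ⌈L / l⌉₊ * l := (div_le_iff₀ hl).1 (Nat.le_ceil _)
  calc ENNReal.ofReal (1 / L) * ∫⁻ t in Set.Icc ξ (ξ + L), G t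
      ≤ ENNReal.ofReal (1 / L) * ∫⁻ t in Set.Icc ξ (ξ + ⌈L / l⌉₊ * l), G t := by gcongr
    _ ≤ ENNReal.ofReal (1 / L) * (⌈L / l⌉₊ * (ENNReal.ofReal l * supMean l G)) := by
        gcongr
        exact setLIntegral_Icc_natCast_mul_le (setLIntegral_Icc_le_mul_supMean hl G) ξ _
    _ = ENNReal.ofReal (1 / L * ⌈L / l⌉₊ * l) * supMean l G := by
        rw [ENNReal.ofReal_mul (by positivity), ENNReal.ofReal_mul (by positivity),
          ENNReal.ofReal_natCast]
        ring
    _ = ENNReal.ofReal (⌈L / l⌉₊ / (L / l)) * supMean l G := by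
        congr 2
        field_simp

theorem limsup_supMean_rpow_le {l r : ℝ} (hl : 0 < l) (hr : 0 ≤ r) (G : ℝ → ℝ≥0∞) :
    limsup (fun L => supMean L G ^ r) atTop ≤ supMean l G ^ r := by
  have hratio : Tendsto (fun L : ℝ => (⌈L / l⌉₊ / (L / l) : ℝ)) atTop (𝓝 1) :=
    tendsto_nat_ceil_div_atTop.comp (tendsto_id.atTop_div_const hl)
  have hbound : Tendsto
      (fun L : ℝ => (ENNReal.ofReal (⌈L / l⌉₊ / (L / l)) * supMean l G) ^ r) atTop
      (𝓝 (supMean l G ^ r)) := by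
    have hmul := ENNReal.Tendsto.mul_const (b := supMean l G) (ENNReal.tendsto_ofReal hratio)
      (.inl (by simp))
    simpa using hmul.ennrpow_const r
  rw [← hbound.limsup_eq]
  refine limsup_le_limsup ?_
  filter_upwards [eventually_gt_atTop 0] with L hL
  gcongr
  exact supMean_le_ceil_div_mul hl hL G

end SupMean

section Weyl

variable {α : Type*} {d : α → α → ℝ} {p : ℝ}

theorem weylD_eq_supMean_rpow (l : ℝ) (f g : ℝ → α) :
    weylD d p l f g = supMean l (fun t => ENNReal.ofReal (d (f t) (g t) ^ p)) ^ (1 / p) := rfl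

theorem weylDinf_le_weylD (hp : 0 ≤ p) {l : ℝ} (hl : 0 < l) (f g : ℝ → α) :
    weylDinf d p f g ≤ weylD d p l f g :=
  limsup_supMean_rpow_le hl (one_div_nonneg.2 hp) _

theorem weylDinf_lt_iff (hp : 0 ≤ p) {f g : ℝ → α} {c : ℝ≥0∞} :
    weylDinf d p f g < c ↔ ∀ᶠ l in atTop, weylD d p l f g < c := by
  refine ⟨fun hlt => eventually_lt_of_limsup_lt hlt, fun hev => ?_⟩
  obtain ⟨l, hlt, hl⟩ := (hev.and (eventually_gt_atTop 0)).exists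
  exact (weylDinf_le_weylD hp hl f g).trans_lt hlt

theorem weylD_comp_add_right (l σ : ℝ) (f g : ℝ → α) :
    weylD d p l (fun t => f (t + σ)) (fun t => g (t + σ)) = weylD d p l f g := by
  simp only [weylD_eq_supMean_rpow]
  rw [supMean_comp_add_right l σ fun t => ENNReal.ofReal (d (f t) (g t) ^ p)]

theorem weylD_comm (hd : ∀ x y, d x y = d y x) (l : ℝ) (f g : ℝ → α) :
    weylD d p l f g = weylD d p l g f := by
  simp only [weylD, hd (f _)]

theorem weylD_mono {e : α → α → ℝ} (hp : 0 ≤ p) (hd : ∀ x y, 0 ≤ d x y)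
    (hde : ∀ x y, d x y ≤ e x y) (l : ℝ) (f g : ℝ → α) : weylD d p l f g ≤ weylD e p l f g := by
  unfold weylD
  gcongr
  · exact hd _ _
  · exact hde _ _

theorem aPeriods_subset_of_le {e : α → α → ℝ} (hp : 0 ≤ p) (hd : ∀ x y, 0 ≤ d x y)
    (hde : ∀ x y, d x y ≤ e x y) (ε : ℝ) (f : ℝ → α) : APeriods e p ε f ⊆ APeriods d p ε f :=
  fun _ hτ => (limsup_le_limsup (.of_forall fun l => weylD_mono hp hd hde l _ _)).trans_lt hτ

theorem aPeriodsL_subset_aPeriods (hp : 0 ≤ p) {l : ℝ} (hl : 0 < l) (ε : ℝ) (f : ℝ → α) :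
    APeriodsL d p l ε f ⊆ APeriods d p ε f :=
  fun _ hτ => (weylDinf_le_weylD hp hl _ _).trans_lt hτ

/-- The contribution of the single interval `[ξ, ξ + l]` to `D_{p,l}(f, g)`, written with `eLpNorm`
to make Minkowski's inequality available; for `l ≤ 0` it has no meaning. -/
noncomputable def weylDOn (d : α → α → ℝ) (p l ξ : ℝ) (f g : ℝ → α) : ℝ≥0∞ :=
  ENNReal.ofReal (1 / l) ^ (1 / p) *
    eLpNorm (fun t => d (f t) (g t)) (ENNReal.ofReal p) (volume.restrict (Set.Icc ξ (ξ + l)))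

theorem weylDOn_comp_add_right (l ξ σ : ℝ) (f g : ℝ → α) :
    weylDOn d p l ξ (fun t => f (t + σ)) (fun t => g (t + σ)) = weylDOn d p l (ξ + σ) f g := by
  rw [weylDOn, weylDOn, ← (measurePreserving_add_right_restrict_Icc l ξ σ).map_eq,
    (measurableEmbedding_addRight σ).eLpNorm_map_measure]
  rfl

theorem weylDOn_comm (hd : ∀ x y, d x y = d y x) (l ξ : ℝ) (f g : ℝ → α) :
    weylDOn d p l ξ f g = weylDOn d p l ξ g f := by
  simp only [weylDOn, hd (f _)]

theorem weylD_eq_iSup_weylDOn (hp : 0 < p) (hd : ∀ x y, 0 ≤ d x y) (l : ℝ) (f g : ℝ → α) :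
    weylD d p l f g = ⨆ ξ, weylDOn d p l ξ f g := by
  have hterm (ξ : ℝ) : (ENNReal.ofReal (1 / l) *
      ∫⁻ t in Set.Icc ξ (ξ + l), ENNReal.ofReal (d (f t) (g t) ^ p)) ^ (1 / p) =
        weylDOn d p l ξ f g := by
    rw [weylDOn, ENNReal.mul_rpow_of_nonneg _ _ (by positivity),
      eLpNorm_eq_lintegral_rpow_enorm_toReal (by simpa) ENNReal.ofReal_ne_top,
      ENNReal.toReal_ofReal hp.le]
    simp only [Real.enorm_of_nonneg (hd _ _), ENNReal.ofReal_rpow_of_nonneg (hd _ _) hp.le]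
  simp only [← hterm]
  exact (ENNReal.orderIsoRpow (1 / p) (by positivity)).map_iSup _

theorem weylDOn_le_weylD (hp : 0 < p) (hd : ∀ x y, 0 ≤ d x y) (l ξ : ℝ) (f g : ℝ → α) :
    weylDOn d p l ξ f g ≤ weylD d p l f g := by
  rw [weylD_eq_iSup_weylDOn hp hd]
  exact le_iSup (weylDOn d p l · f g) ξ

variable [TopologicalSpace α]

theorem weylDOn_triangle (hp : 1 ≤ p) (hd : IsContinuousPseudoDist d) (l ξ : ℝ) {f g k : ℝ → α}
    (hf : AEStronglyMeasurable f) (hg : AEStronglyMeasurable g) (hk : AEStronglyMeasurable k) :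
    weylDOn d p l ξ f k ≤ weylDOn d p l ξ f g + weylDOn d p l ξ g k := by
  simp only [weylDOn, ← mul_add]
  gcongr
  calc eLpNorm (fun t => d (f t) (k t)) (ENNReal.ofReal p) (volume.restrict (Set.Icc ξ (ξ + l)))
      ≤ eLpNorm ((fun t => d (f t) (g t)) + fun t => d (g t) (k t)) (ENNReal.ofReal p)
          (volume.restrict (Set.Icc ξ (ξ + l))) :=
        eLpNorm_mono_real fun t => by
          rw [Real.norm_of_nonneg (hd.nonneg _ _)]
          exact hd.triangle _ _ _
    _ ≤ _ := eLpNorm_add_le (hd.aestronglyMeasurable hf.restrict hg.restrict)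
        (hd.aestronglyMeasurable hg.restrict hk.restrict) (by simpa)

theorem weylDOn_triangle4 (hp : 1 ≤ p) (hd : IsContinuousPseudoDist d) (l ξ : ℝ)
    {f g k m : ℝ → α} (hf : AEStronglyMeasurable f) (hg : AEStronglyMeasurable g)
    (hk : AEStronglyMeasurable k) (hm : AEStronglyMeasurable m) :
    weylDOn d p l ξ f m ≤
      weylDOn d p l ξ f g + weylDOn d p l ξ g k + weylDOn d p l ξ k m :=
  (weylDOn_triangle hp hd l ξ hf hk hm).trans <|
    add_le_add_left (weylDOn_triangle hp hd l ξ hf hg hk) _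

theorem weylD_triangle (hp : 1 ≤ p) (hd : IsContinuousPseudoDist d) (l : ℝ) {f g k : ℝ → α}
    (hf : AEStronglyMeasurable f) (hg : AEStronglyMeasurable g) (hk : AEStronglyMeasurable k) :
    weylD d p l f k ≤ weylD d p l f g + weylD d p l g k := by
  have hp₀ : 0 < p := one_pos.trans_le hp
  rw [weylD_eq_iSup_weylDOn hp₀ hd.nonneg l f k]
  exact iSup_le fun ξ => (weylDOn_triangle hp hd l ξ hf hg hk).trans <|
    add_le_add (weylDOn_le_weylD hp₀ hd.nonneg l ξ f g) (weylDOn_le_weylD hp₀ hd.nonneg l ξ g k)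

theorem aestronglyMeasurable_comp_add_right {f : ℝ → α} (hf : AEStronglyMeasurable f) (σ : ℝ) :
    AEStronglyMeasurable (fun t => f (t + σ)) :=
  hf.comp_quasiMeasurePreserving (measurePreserving_add_right volume σ).quasiMeasurePreserving

theorem aPeriods_sub_subset (hp : 1 ≤ p) (hd : IsContinuousPseudoDist d) {f : ℝ → α}
    (hf : AEStronglyMeasurable f) (ε₁ ε₂ : ℝ) :
    APeriods d p ε₁ f - APeriods d p ε₂ f ⊆ APeriods d p (ε₁ + ε₂) f := by
  rintro _ ⟨τ, hτ, σ, hσ, rfl⟩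
  have hp₀ : 0 < p := one_pos.trans_le hp
  have hε₁ : 0 < ε₁ := ENNReal.ofReal_pos.1 (zero_le.trans_lt hτ)
  have hε₂ : 0 < ε₂ := ENNReal.ofReal_pos.1 (zero_le.trans_lt hσ)
  refine (weylDinf_lt_iff hp₀.le).2 ?_
  filter_upwards [(weylDinf_lt_iff hp₀.le).1 hτ,
    (weylDinf_lt_iff hp₀.le).1 hσ] with l hτl hσl
  calc weylD d p l f (fun t => f (t + (τ - σ)))
      = weylD d p l (fun t => f (t + σ)) (fun t => f (t + τ)) := by
        rw [← weylD_comp_add_right l σ]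
        simp only [add_assoc, add_sub_cancel]
    _ ≤ weylD d p l (fun t => f (t + σ)) f + weylD d p l f (fun t => f (t + τ)) :=
        weylD_triangle hp hd l (aestronglyMeasurable_comp_add_right hf σ) hf
          (aestronglyMeasurable_comp_add_right hf τ)
    _ < ENNReal.ofReal ε₂ + ENNReal.ofReal ε₁ := by
        rw [weylD_comm hd.comm l _ f]
        exact ENNReal.add_lt_add hσl hτl
    _ = ENNReal.ofReal (ε₁ + ε₂) := by rw [add_comm, ENNReal.ofReal_add hε₁.le hε₂.le]

theorem aPeriods_half_sub_half_subset (hp : 1 ≤ p) (hd : IsContinuousPseudoDist d) {f : ℝ → α}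
    (hf : AEStronglyMeasurable f) (ε : ℝ) :
    APeriods d p (ε / 2) f - APeriods d p (ε / 2) f ⊆ APeriods d p ε f := by
  simpa only [add_halves] using aPeriods_sub_subset hp hd hf (ε / 2) (ε / 2)

theorem MemMp.memLp_kuratowski_comp (hp : 1 ≤ p) (hd : IsContinuousPseudoDist d) {x₀ : α}
    {f : ℝ → α} (hf : MemMp d p x₀ f) (a b : ℝ) :
    MemLp (hd.kuratowski x₀ ∘ f) (ENNReal.ofReal p) (volume.restrict (Set.Icc a b)) := by
  obtain ⟨hmeas, C, hC⟩ := hf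
  have hp₀ : 0 < p := one_pos.trans_le hp
  refine ⟨((hd.continuous_kuratowski x₀).comp_aestronglyMeasurable hmeas).restrict, ?_⟩
  rw [eLpNorm_lt_top_iff_lintegral_rpow_enorm_lt_top (by simpa) ENNReal.ofReal_ne_top,
    ENNReal.toReal_ofReal hp₀.le]
  have henorm (t : ℝ) :
      ‖(hd.kuratowski x₀ ∘ f) t‖ₑ ^ p = ENNReal.ofReal (d (f t) x₀ ^ p) := by
    rw [← ofReal_norm, Function.comp_apply, hd.norm_kuratowski,
      ENNReal.ofReal_rpow_of_nonneg (hd.nonneg _ _) hp₀.le]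
  have hcover : Set.Icc a b ⊆ Set.Icc a (a + ⌈b - a⌉₊ * 1) :=
    Set.Icc_subset_Icc_right (by linarith [Nat.le_ceil (b - a)])
  simp only [henorm]
  calc ∫⁻ t in Set.Icc a b, ENNReal.ofReal (d (f t) x₀ ^ p)
      ≤ ∫⁻ t in Set.Icc a (a + ⌈b - a⌉₊ * 1), ENNReal.ofReal (d (f t) x₀ ^ p) :=
        lintegral_mono_set hcover
    _ ≤ ⌈b - a⌉₊ * ENNReal.ofReal C := setLIntegral_Icc_natCast_mul_le hC a _
    _ < ∞ := ENNReal.mul_lt_top (ENNReal.natCast_lt_top _) ENNReal.ofReal_lt_top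

theorem MemMp.tendsto_eLpNorm_comp_add (hp : 1 ≤ p) (hd : IsContinuousPseudoDist d) {x₀ : α}
    {f : ℝ → α} (hf : MemMp d p x₀ f) (a b : ℝ) :
    Tendsto (fun σ => eLpNorm (fun t => d (f t) (f (t + σ))) (ENNReal.ofReal p)
      (volume.restrict (Set.Icc a b))) (𝓝 0) (𝓝 0) := by
  have hlim := tendsto_eLpNorm_restrict_Icc_comp_add_sub (by simpa) ENNReal.ofReal_ne_top
    (hf.memLp_kuratowski_comp hp hd) a b
  refine hlim.congr fun σ => eLpNorm_congr_norm_ae (.of_forall fun t => ?_)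
  rw [Function.comp_apply, Function.comp_apply, hd.norm_kuratowski_sub,
    Real.norm_of_nonneg (hd.nonneg _ _), hd.comm]

theorem MemMp.eventually_forall_weylDOn_lt (hp : 1 ≤ p) (hd : IsContinuousPseudoDist d) {x₀ : α}
    {f : ℝ → α} (hf : MemMp d p x₀ f) {l c : ℝ} (hc : 0 < c) (b : ℝ) :
    ∀ᶠ σ in 𝓝 0, ∀ ξ ∈ Set.Icc 0 b,
      weylDOn d p l ξ f (fun t => f (t + σ)) < ENNReal.ofReal c := by
  have hlim := ENNReal.Tendsto.const_mul (a := ENNReal.ofReal (1 / l) ^ (1 / p))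
    (hf.tendsto_eLpNorm_comp_add hp hd 0 (b + l))
    (.inr (ENNReal.rpow_ne_top_of_nonneg (by positivity) ENNReal.ofReal_ne_top))
  rw [mul_zero] at hlim
  filter_upwards [hlim.eventually_lt_const (ENNReal.ofReal_pos.2 hc)] with σ hσ ξ hξ
  refine lt_of_le_of_lt ?_ hσ
  unfold weylDOn
  gcongr
  · exact hξ.1
  · exact hξ.2

theorem MemMp.eventually_weylD_le (hp : 1 ≤ p) (hd : IsContinuousPseudoDist d) {x₀ : α}
    {f : ℝ → α} (hf : MemMp d p x₀ f) {l ε : ℝ} (hε : 0 < ε)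
    (hper : RelDense (APeriodsL d p l ε f)) :
    ∀ᶠ σ in 𝓝 0, weylD d p l f (fun t => f (t + σ)) ≤ ENNReal.ofReal (3 * ε) := by
  have hp₀ : 0 < p := one_pos.trans_le hp
  obtain ⟨b, -, hper⟩ := hper
  filter_upwards [hf.eventually_forall_weylDOn_lt hp hd (l := l) hε b] with σ hσ
  rw [weylD_eq_iSup_weylDOn hp₀ hd.nonneg]
  refine iSup_le fun ξ => ?_
  obtain ⟨τ, ⟨hτ_ge, hτ_le⟩, hτ⟩ := hper (-ξ)
  have hmeas := aestronglyMeasurable_comp_add_right hf.1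
  have hleft : weylDOn d p l ξ f (fun t => f (t + τ)) ≤ ENNReal.ofReal ε :=
    (weylDOn_le_weylD hp₀ hd.nonneg l ξ _ _).trans (le_of_lt hτ)
  have hmiddle : weylDOn d p l ξ (fun t => f (t + τ)) (fun t => f (t + τ + σ)) ≤
      ENNReal.ofReal ε := by
    rw [weylDOn_comp_add_right l ξ τ f (fun t => f (t + σ))]
    exact (hσ _ ⟨by linarith, by linarith⟩).le
  have hright : weylDOn d p l ξ (fun t => f (t + τ + σ)) (fun t => f (t + σ)) ≤
      ENNReal.ofReal ε := by
    simp only [add_right_comm _ τ σ]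
    rw [weylDOn_comp_add_right l ξ σ (fun t => f (t + τ)) f, weylDOn_comm hd.comm]
    exact (weylDOn_le_weylD hp₀ hd.nonneg l _ _ _).trans (le_of_lt hτ)
  have hmeas' : AEStronglyMeasurable (fun t => f (t + τ + σ)) := by
    simpa only [add_assoc] using hmeas (τ + σ)
  calc weylDOn d p l ξ f (fun t => f (t + σ))
      ≤ weylDOn d p l ξ f (fun t => f (t + τ)) +
          weylDOn d p l ξ (fun t => f (t + τ)) (fun t => f (t + τ + σ)) +
            weylDOn d p l ξ (fun t => f (t + τ + σ)) (fun t => f (t + σ)) :=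
        weylDOn_triangle4 hp hd l ξ hf.1 (hmeas τ) hmeas' (hmeas σ)
    _ ≤ ENNReal.ofReal ε + ENNReal.ofReal ε + ENNReal.ofReal ε := by gcongr
    _ = ENNReal.ofReal (3 * ε) := by
        rw [← ENNReal.ofReal_add hε.le hε.le, ← ENNReal.ofReal_add (by positivity) hε.le]
        ring_nf

theorem MemWp.relDense_aPeriods (hp : 0 ≤ p) {x₀ : α} {f : ℝ → α} (hf : MemWp d p x₀ f) {ε : ℝ}
    (hε : 0 < ε) : RelDense (APeriods d p ε f) := by
  obtain ⟨l, hl, hper⟩ := hf.2 ε hε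
  exact hper.mono (aPeriodsL_subset_aPeriods hp hl ε f)

theorem MemWp.aPeriods_mem_nhds_zero (hp : 1 ≤ p) (hd : IsContinuousPseudoDist d) {x₀ : α}
    {f : ℝ → α} (hf : MemWp d p x₀ f) {ε : ℝ} (hε : 0 < ε) : APeriods d p ε f ∈ 𝓝 0 := by
  obtain ⟨l, hl, hper⟩ := hf.2 (ε / 4) (by positivity)
  filter_upwards [hf.1.eventually_weylD_le hp hd (by positivity) hper] with σ hσ
  calc weylDinf d p f (fun t => f (t + σ))
      ≤ weylD d p l f (fun t => f (t + σ)) := weylDinf_le_weylD (zero_le_one.trans hp) hl _ _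
    _ ≤ ENNReal.ofReal (3 * (ε / 4)) := hσ
    _ < ENNReal.ofReal ε := (ENNReal.ofReal_lt_ofReal_iff hε).2 (by linarith)

theorem MemWp.exists_finite_add_aPeriods_eq_univ (hp : 1 ≤ p) (hd : IsContinuousPseudoDist d)
    {x₀ : α} {f : ℝ → α} (hf : MemWp d p x₀ f) {ε : ℝ} (hε : 0 < ε) :
    ∃ s : Set ℝ, s.Finite ∧ s + APeriods d p ε f = Set.univ := by
  obtain ⟨s, hs, hcover⟩ := (hf.relDense_aPeriods (zero_le_one.trans hp)
    (half_pos hε)).exists_finite_add_sub_eq_univ (hf.aPeriods_mem_nhds_zero hp hd (half_pos hε))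
  refine ⟨s, hs, Set.univ_subset_iff.1 (hcover.ge.trans (Set.add_subset_add_left ?_))⟩
  exact aPeriods_half_sub_half_subset hp hd hf.1.1 ε

theorem RelDense.sub_inter_aPeriods (hp : 1 ≤ p) (hd : IsContinuousPseudoDist d) {T : Set ℝ}
    (hT : RelDense T) {x₀ : α} {f : ℝ → α} (hf : MemWp d p x₀ f) {ε : ℝ} (hε : 0 < ε) :
    RelDense ((T - T) ∩ APeriods d p ε f) := by
  obtain ⟨s, hs, hcover⟩ := hf.exists_finite_add_aPeriods_eq_univ hp hd (half_pos hε)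
  exact (hT.sub_inter_sub hs hcover).mono <|
    Set.inter_subset_inter_right _ (aPeriods_half_sub_half_subset hp hd hf.1.1 ε)

end Weyl

theorem weyl_tilde_almost_periods_with_scalar_general {α β γ : Type*} [TopologicalSpace α]
    [TopologicalSpace β] [TopologicalSpace γ] {dα : α → α → ℝ} {dβ : β → β → ℝ} {dγ : γ → γ → ℝ}
    (hdα : IsContinuousPseudoDist dα) (hdβ : IsContinuousPseudoDist dβ)
    (hdγ : IsContinuousPseudoDist dγ) {p : ℝ} (hp : 1 ≤ p)
    {g : ℝ → α} (hg : AEStronglyMeasurable g) {F : ℝ → β} (hF : AEStronglyMeasurable F)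
    (hT : ∀ ε > (0 : ℝ), RelDense (APeriods dα p ε g ∩ APeriods dβ p ε F))
    {x₀ : γ} {h : ℝ → γ} (hh : MemWp dγ p x₀ h) :
    ∀ ε > (0 : ℝ), RelDense ((APeriods dα p ε g ∩ APeriods dβ p ε F) ∩ APeriods dγ p ε h) := by
  intro ε hε
  refine ((hT (ε / 2) (half_pos hε)).sub_inter_aPeriods hp hdγ hh hε).mono
    (Set.inter_subset_inter_left _ (Set.subset_inter ?_ ?_))
  · exact (Set.sub_subset_sub Set.inter_subset_left Set.inter_subset_left).trans
      (aPeriods_half_sub_half_subset hp hdα hg ε)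
  · exact (Set.sub_subset_sub Set.inter_subset_right Set.inter_subset_right).trans
      (aPeriods_half_sub_half_subset hp hdβ hF ε)

open TopologicalSpace in
/-- **Relative density of `𝒯(ε) ∩ P^{(ρ_ℝ)}₁(ε; h)`.**
Let `g ∈ W̃(ℝ,U)` and `F ∈ W̃₁(ℝ, (cl U, dist_{ρ'}))` be such that
`𝒯(ε) = P^{(ρ')}₁(ε; g) ∩ P^{(dist_{ρ'})}₁(ε; F)` is relatively dense for all `ε > 0`.
If `h ∈ W₁(ℝ,ℝ)` has a dense (and countable) frequency module `Mod h`, then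
`𝒯(ε) ∩ P^{(ρ_ℝ)}₁(ε; h)` is relatively dense for every `ε > 0`. -/
theorem weyl_tilde_almost_periods_with_scalar {U : Type*} [MetricSpace U]
    [CompleteSpace U] (x₀ : U)
    (g : ℝ → U) (hg : MemWpTilde bdist 1 x₀ g)
    (F : ℝ → Closeds U) (hFne : ∀ t : ℝ, (F t : Set U).Nonempty)
    (hF : MemWpTilde clDist 1 (⟨{x₀}, isClosed_singleton⟩ : Closeds U) F)
    (hT : ∀ ε > (0 : ℝ), RelDense (APeriods bdist 1 ε g ∩ APeriods clDist 1 ε F))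
    (h : ℝ → ℝ) (hh : MemWp dist 1 (0 : ℝ) h)
    (hhdense : Dense (WMod bdist h)) (hhcount : (WMod bdist h).Countable) :
    ∀ ε > (0 : ℝ),
      RelDense ((APeriods bdist 1 ε g ∩ APeriods clDist 1 ε F) ∩
        APeriods bdist 1 ε h) :=
  fun ε hε => (weyl_tilde_almost_periods_with_scalar_general .bdist .clDist .dist le_rfl hg.1.1
    hF.1.1 hT hh ε hε).mono <| Set.inter_subset_inter_right _ <|
      aPeriods_subset_of_le zero_le_one IsContinuousPseudoDist.bdist.nonneg
        (fun _ _ => min_le_right _ _) ε h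
end
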